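/- Let λ ≥ 1 with √λ ∈ ℤ/λ, and let s > 1/4. Define v1, v2, v3 on (λ𝕋) × ℝ by ṽ1(k,τ) = 1_{[−1,1]}(τ − 4π²k³)·1_{{1/λ}}(k), ṽ2(k,τ) = 1_{[−1,1]}(τ − 4π²k³)·1_{{−2/λ}}(k), ṽ3(k,τ) = 1_{[−1,1]}(τ − 4π²k³)·1_{{√λ}}(k). Then ‖v1‖_{Ẋ^{s,1/2}} ~ ‖v2‖_{Ẋ^{s,1/2}} ~ λ^{−s−1/2} and ‖v3‖_{Ẋ^{s,1/2}} ~ λ^{s/2−1/2}, while ‖J[v1,v2,v3]‖_{Ẋ^{s,−1/2}} ≳ λ^{s/2−2}; consequently the estimate ‖J[v1,v2,v3]‖_{Ẋ^{s,−1/2}} ≲ λ^{0+}·∏‖vj‖_{Ẋ^{s,1/2}} fails for large λ whenever s > 1/4. -/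

import Mathlib

open Real MeasureTheory

/-- The homogeneous Bourgain norm `Ẋ^{s,b}` on `λ𝕋 × ℝ`, computed from the space-time
Fourier transform `w(k,τ)`, `k ∈ ℤ/λ`, with the normalized counting measure `(dk)_λ`. -/
noncomputable def XdotNorm (lam s b : ℝ) (w : ℝ → ℝ → ℂ) : ℝ :=
  Real.sqrt ((1 / lam) * ∑' n : ℤ,
    ∫ τ : ℝ, |((n : ℝ) / lam)| ^ (2 * s) *
      (1 + |τ - 4 * π ^ 2 * ((n : ℝ) / lam) ^ 3|) ^ (2 * b) * ‖w ((n : ℝ) / lam) τ‖ ^ 2)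

/-- `ṽ(k,τ) = 1_{[−1,1]}(τ − 4π²k³)·1_{{k0}}(k)`. -/
noncomputable def airyBump (k0 : ℝ) : ℝ → ℝ → ℂ := fun k τ =>
  if k = k0 ∧ |τ - 4 * π ^ 2 * k ^ 3| ≤ 1 then 1 else 0

/-- The space-time Fourier transform of the non-resonant trilinear operator `J[u,v,w]`
on `λ𝕋 × ℝ`: `i(k/3)` times the convolution restricted to non-resonant frequencies
`(k1+k2)(k2+k3)(k3+k1) ≠ 0`, minus the resonant correction. -/
noncomputable def Jtilde (lam : ℝ) (u v w : ℝ → ℝ → ℂ) (k τ : ℝ) : ℂ :=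
  Complex.I * (k / 3) * ((1 / lam) ^ 2 * ∑' p : ℤ × ℤ,
      (if ((p.1 : ℝ) / lam + (p.2 : ℝ) / lam) *
            ((p.2 : ℝ) / lam + (k - (p.1 : ℝ) / lam - (p.2 : ℝ) / lam)) *
            ((k - (p.1 : ℝ) / lam - (p.2 : ℝ) / lam) + (p.1 : ℝ) / lam) ≠ 0 then
        ∫ τ1 : ℝ, ∫ τ2 : ℝ,
          u ((p.1 : ℝ) / lam) τ1 * v ((p.2 : ℝ) / lam) τ2 *
            w (k - (p.1 : ℝ) / lam - (p.2 : ℝ) / lam) (τ - τ1 - τ2)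
      else 0))
    - Complex.I * k * ∫ τ1 : ℝ, ∫ τ2 : ℝ, u k τ1 * v k τ2 * w (-k) (τ - τ1 - τ2)

/-!
Each Airy bump lives on a single frequency, so its norm is `√3 |k|^s λ^(-1/2)`. For frequencies
`k₁, k₂, k₃` off the resonant set, `J` lives on the single frequency `K = k₁ + k₂ + k₃`, where its
`τ`-profile is the convolution of three windows centred at the phases `4π²kⱼ³`. This convolution has
mass `8` and lies within `3` of `4π²(k₁³ + k₂³ + k₃³)`, whose distance from `4π²K³` is
`12π²|(k₁ + k₂)(k₂ + k₃)(k₃ + k₁)|`; Cauchy–Schwarz against the weight `⟨τ - 4π²K³⟩` then bounds the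
norm of `J` below. At `(1/λ, -2/λ, √λ)` the resonance function stays bounded while `K ~ √λ`, so `J`
has norm `≳ λ^(s/2 - 2)` against `~ λ^(-3s/2 - 3/2)` for the product of the three inputs: the ratio
grows at least like `λ^(2s - 1/2)`.
-/

open Filter Metric Set
open scoped Convolution Pointwise

section CauchySchwarz

variable {α E : Type*} [MeasurableSpace α] {μ : Measure α} [NormedAddCommGroup E] [NormedSpace ℝ E]

lemma norm_integral_sq_le_measureReal_mul_integral_norm_sq {f : α → E} {S : Set α}
    (hμS : μ S ≠ ⊤) (hfS : Function.support f ⊆ S) (hf : MemLp f 2 μ) :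
    ‖∫ x, f x ∂μ‖ ^ 2 ≤ μ.real S * ∫ x, ‖f x‖ ^ 2 ∂μ := by
  have hf_zero : ∀ x ∉ S, f x = 0 := fun x hx => Function.notMem_support.1 fun h => hx (hfS h)
  have hf_sq : Integrable (fun x => ‖f x‖ ^ 2) μ := (memLp_two_iff_integrable_sq_norm hf.1).1 hf
  have hf_sq_zero : ∀ x ∉ S, ‖f x‖ ^ 2 = 0 := fun x hx => by simp [hf_zero x hx]
  rw [← setIntegral_eq_integral_of_forall_compl_eq_zero hf_zero,
    ← setIntegral_eq_integral_of_forall_compl_eq_zero hf_sq_zero]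
  rcases eq_or_ne (μ S) 0 with hS | hS
  · simp [Measure.restrict_eq_zero.2 hS]
  have : IsFiniteMeasure (μ.restrict S) := ⟨by simpa using hμS.lt_top⟩
  have hf_int : IntegrableOn (fun x => ‖f x‖) S μ := ((hf.restrict S).integrable one_le_two).norm
  have hpos : 0 < μ.real S := ENNReal.toReal_pos hS hμS
  have jensen : (⨍ x in S, ‖f x‖ ∂μ) ^ 2 ≤ ⨍ x in S, ‖f x‖ ^ 2 ∂μ :=
    even_two.convexOn_pow.map_set_average_le (continuous_pow 2).continuousOn isClosed_univ hS hμS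
      (by simp) hf_int hf_sq.integrableOn
  simp only [setAverage_eq, smul_eq_mul, mul_pow] at jensen
  calc ‖∫ x in S, f x ∂μ‖ ^ 2 ≤ (∫ x in S, ‖f x‖ ∂μ) ^ 2 := by
        gcongr; exact norm_integral_le_integral_norm f
    _ = μ.real S ^ 2 * ((μ.real S)⁻¹ ^ 2 * (∫ x in S, ‖f x‖ ∂μ) ^ 2) := by field_simp
    _ ≤ μ.real S ^ 2 * ((μ.real S)⁻¹ * ∫ x in S, ‖f x‖ ^ 2 ∂μ) := by gcongr
    _ = μ.real S * ∫ x in S, ‖f x‖ ^ 2 ∂μ := by field_simp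

lemma norm_integral_sq_le_integral_inv_one_add_abs_sub_mul_norm_sq {f : ℝ → E} {c R : ℝ}
    (hR : 0 ≤ R) (hfR : Function.support f ⊆ closedBall c R) (hf : MemLp f 2) (d : ℝ) :
    ‖∫ τ, f τ‖ ^ 2 ≤
      2 * R * (1 + R + |c - d|) * ∫ τ, (1 + |τ - d|)⁻¹ * ‖f τ‖ ^ 2 := by
  have hf_sq : Integrable fun τ => ‖f τ‖ ^ 2 := (memLp_two_iff_integrable_sq_norm hf.1).1 hf
  have hweighted : Integrable fun τ => (1 + |τ - d|)⁻¹ * ‖f τ‖ ^ 2 := by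
    refine hf_sq.bdd_mul (c := 1) (by fun_prop) (.of_forall fun τ => ?_)
    rw [norm_inv, Real.norm_of_nonneg (by positivity)]
    exact inv_le_one_of_one_le₀ (by simp)
  have hpointwise (τ : ℝ) :
      ‖f τ‖ ^ 2 ≤ (1 + R + |c - d|) * ((1 + |τ - d|)⁻¹ * ‖f τ‖ ^ 2) := by
    by_cases hτ : f τ = 0
    · simp [hτ]
    have hτc : |τ - c| ≤ R := hfR hτ
    have hτd : 1 + |τ - d| ≤ 1 + R + |c - d| := by linarith [abs_sub_le τ c d]
    rw [← mul_assoc, ← div_eq_mul_inv]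
    exact le_mul_of_one_le_left (by positivity) ((one_le_div (by positivity)).2 hτd)
  calc ‖∫ τ, f τ‖ ^ 2 ≤ volume.real (closedBall c R) * ∫ τ, ‖f τ‖ ^ 2 :=
        norm_integral_sq_le_measureReal_mul_integral_norm_sq measure_closedBall_lt_top.ne hfR hf
    _ = 2 * R * ∫ τ, ‖f τ‖ ^ 2 := by rw [Real.volume_real_closedBall hR]
    _ ≤ 2 * R * ∫ τ, (1 + R + |c - d|) * ((1 + |τ - d|)⁻¹ * ‖f τ‖ ^ 2) := by
        gcongr ?_ * ?_
        exact integral_mono hf_sq (hweighted.const_mul _) hpointwise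
    _ = _ := by rw [integral_const_mul, ← mul_assoc]

end CauchySchwarz

section Convolution

variable {𝕜 G E E' F : Type*} [NontriviallyNormedField 𝕜] [NormedAddCommGroup E]
  [NormedAddCommGroup E'] [NormedAddCommGroup F] [NormedSpace 𝕜 E] [NormedSpace 𝕜 E']
  [NormedSpace 𝕜 F] [NormedSpace ℝ F] [MeasurableSpace G] [Sub G] {μ : Measure G}

lemma norm_convolution_le (L : E →L[𝕜] E' →L[𝕜] F) {f : G → E} {g : G → E'} {C : ℝ}
    (hf : Integrable f μ) (hg : ∀ x, ‖g x‖ ≤ C) (x : G) :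
    ‖(f ⋆[L, μ] g) x‖ ≤ ‖L‖ * (∫ t, ‖f t‖ ∂μ) * C := by
  rw [convolution_def, ← integral_const_mul, ← integral_mul_const]
  refine norm_integral_le_of_norm_le ((hf.norm.const_mul _).mul_const C) (.of_forall fun t => ?_)
  exact (L.le_opNorm₂ _ _).trans (by gcongr; exact hg _)

end Convolution

/-- The indicator of the interval of radius `1` about `c`, the `τ`-profile of an Airy bump. It is
complex-valued so that it can be convolved with the other space-time Fourier transforms. -/
noncomputable def unitWindow (c : ℝ) : ℝ → ℂ :=
  (closedBall c 1).indicator 1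

/-- The convolution of three unit windows, the `τ`-profile of a product of three Airy bumps. -/
noncomputable def tripleWindow (a b c : ℝ) : ℝ → ℂ :=
  unitWindow a ⋆[ContinuousLinearMap.mul ℝ ℂ]
    (unitWindow b ⋆[ContinuousLinearMap.mul ℝ ℂ] unitWindow c)

section Window

variable (a b c : ℝ)

lemma support_unitWindow_subset : Function.support (unitWindow c) ⊆ closedBall c 1 :=
  Set.support_indicator_subset

lemma norm_unitWindow_le_one (τ : ℝ) : ‖unitWindow c τ‖ ≤ 1 :=
  (norm_indicator_le_norm_self _ _).trans (by simp)

lemma integrable_unitWindow : Integrable (unitWindow c) :=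
  (integrable_indicator_iff measurableSet_closedBall).2
    (integrableOn_const measure_closedBall_lt_top.ne)

lemma integral_unitWindow : ∫ τ, unitWindow c τ = 2 := by
  rw [unitWindow, integral_indicator measurableSet_closedBall]
  simp

lemma integral_one_add_abs_sub_mul_norm_unitWindow_sq :
    ∫ τ, (1 + |τ - c|) * ‖unitWindow c τ‖ ^ 2 = 3 := by
  have hradial (τ : ℝ) : (1 + |τ - c|) * ‖unitWindow c τ‖ ^ 2 =
      (Iic (1 : ℝ)).indicator (fun t => 1 + t) |τ - c| := by
    by_cases hτ : |τ - c| ≤ 1 <;> simp [unitWindow, Real.dist_eq, hτ]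
  simp_rw [hradial]
  rw [integral_sub_right_eq_self (fun τ => (Iic (1 : ℝ)).indicator (fun t => 1 + t) |τ|) c,
    integral_comp_abs (f := (Iic (1 : ℝ)).indicator fun t => 1 + t),
    setIntegral_indicator measurableSet_Iic, Ioi_inter_Iic,
    ← intervalIntegral.integral_of_le zero_le_one,
    intervalIntegral.integral_add (by simp) (by simp)]
  norm_num

lemma support_tripleWindow_subset :
    Function.support (tripleWindow a b c) ⊆ closedBall (a + b + c) 3 := by
  calc Function.support (tripleWindow a b c)
      ⊆ closedBall a 1 + (closedBall b 1 + closedBall c 1) := by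
        refine (support_convolution_subset _).trans (Set.add_subset_add
          (support_unitWindow_subset a) ((support_convolution_subset _).trans ?_))
        exact Set.add_subset_add (support_unitWindow_subset b) (support_unitWindow_subset c)
    _ = closedBall (a + b + c) 3 := by
        rw [closedBall_add_closedBall zero_le_one zero_le_one,
          closedBall_add_closedBall zero_le_one (by norm_num), ← add_assoc]
        norm_num

lemma memLp_tripleWindow : MemLp (tripleWindow a b c) 2 := by
  have hbound (τ : ℝ) := norm_convolution_le (.mul ℝ ℂ) (integrable_unitWindow a)
    (norm_convolution_le (.mul ℝ ℂ) (integrable_unitWindow b) (norm_unitWindow_le_one c)) τ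
  have hcompact : HasCompactSupport (tripleWindow a b c) :=
    .of_support_subset_isCompact (isCompact_closedBall _ _) (support_tripleWindow_subset a b c)
  have hint : Integrable (tripleWindow a b c) := (integrable_unitWindow a).integrable_convolution _
    ((integrable_unitWindow b).integrable_convolution _ (integrable_unitWindow c))
  exact hcompact.memLp_of_bound hint.1 _ (.of_forall hbound)

lemma integral_tripleWindow : ∫ τ, tripleWindow a b c τ = 8 := by
  rw [tripleWindow, integral_convolution _ (integrable_unitWindow a)
      ((integrable_unitWindow b).integrable_convolution _ (integrable_unitWindow c)),
    integral_convolution _ (integrable_unitWindow b) (integrable_unitWindow c)]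
  simp only [integral_unitWindow, ContinuousLinearMap.mul_apply']
  norm_num

lemma tripleWindow_apply (τ : ℝ) : tripleWindow a b c τ =
    ∫ τ₁, ∫ τ₂, unitWindow a τ₁ * unitWindow b τ₂ * unitWindow c (τ - τ₁ - τ₂) := by
  simp only [tripleWindow, convolution_def, ContinuousLinearMap.mul_apply', mul_assoc,
    integral_const_mul]

end Window

/-- The dispersion relation `τ = 4π²k³` of the Airy equation `∂ₜu + ∂ₓ³u = 0`, for plane waves
normalized as `exp (2πi(kx + τt))`. -/
noncomputable def airyPhase (k : ℝ) : ℝ :=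
  4 * π ^ 2 * k ^ 3

lemma airyPhase_add_add_sub (k₁ k₂ k₃ : ℝ) :
    airyPhase k₁ + airyPhase k₂ + airyPhase k₃ - airyPhase (k₁ + k₂ + k₃) =
      -(12 * π ^ 2 * ((k₁ + k₂) * (k₂ + k₃) * (k₃ + k₁))) := by
  simp only [airyPhase]
  ring

lemma airyBump_apply (k₀ k τ : ℝ) :
    airyBump k₀ k τ = if k = k₀ then unitWindow (airyPhase k₀) τ else 0 := by
  by_cases hk : k = k₀
  · subst hk
    by_cases hτ : |τ - 4 * π ^ 2 * k ^ 3| ≤ 1 <;>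
      simp [airyBump, unitWindow, airyPhase, Real.dist_eq, hτ]
  · simp [airyBump, hk]

lemma integral_airyBump_mul_airyBump_mul_airyBump (k₁ k₂ k₃ l₁ l₂ l₃ τ : ℝ) :
    ∫ τ₁, ∫ τ₂, airyBump k₁ l₁ τ₁ * airyBump k₂ l₂ τ₂ * airyBump k₃ l₃ (τ - τ₁ - τ₂) =
      if l₁ = k₁ ∧ l₂ = k₂ ∧ l₃ = k₃ then
        tripleWindow (airyPhase k₁) (airyPhase k₂) (airyPhase k₃) τ
      else 0 := by
  split_ifs with hl
  · simp [airyBump_apply, hl, tripleWindow_apply]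
  · have hzero (τ₁ τ₂ : ℝ) :
        airyBump k₁ l₁ τ₁ * airyBump k₂ l₂ τ₂ * airyBump k₃ l₃ (τ - τ₁ - τ₂) = 0 := by
      simp only [airyBump_apply]
      split_ifs <;> simp_all
    simp [hzero]

section Bourgain

variable {lam s : ℝ}

lemma mem_zmultiples_inv_iff {x : ℝ} :
    x ∈ AddSubgroup.zmultiples lam⁻¹ ↔ ∃ n : ℤ, (n : ℝ) / lam = x := by
  simp only [AddSubgroup.mem_zmultiples_iff, zsmul_eq_mul, div_eq_mul_inv]

lemma XdotNorm_eq_of_forall_ne_eq_zero (hlam : lam ≠ 0) {k : ℝ}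
    (hk : k ∈ AddSubgroup.zmultiples lam⁻¹) (b : ℝ) {w : ℝ → ℝ → ℂ}
    (hw : ∀ l ≠ k, ∀ τ, w l τ = 0) :
    XdotNorm lam s b w =
      |k| ^ s * √(1 / lam * ∫ τ, (1 + |τ - airyPhase k|) ^ (2 * b) * ‖w k τ‖ ^ 2) := by
  obtain ⟨n, rfl⟩ := mem_zmultiples_inv_iff.1 hk
  have hne (m : ℤ) (hm : m ≠ n) : (m : ℝ) / lam ≠ n / lam := by
    simpa [div_left_inj' hlam] using hm
  rw [XdotNorm, tsum_eq_single n fun m hm => by simp [hw _ (hne m hm)]]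
  simp only [mul_assoc, integral_const_mul, airyPhase]
  rw [mul_left_comm, Real.sqrt_mul (by positivity), mul_comm 2 s,
    Real.rpow_mul (abs_nonneg _), Real.rpow_two, Real.sqrt_sq (by positivity)]

lemma XdotNorm_airyBump (hlam : lam ≠ 0) {k : ℝ} (hk : k ∈ AddSubgroup.zmultiples lam⁻¹) :
    XdotNorm lam s (1 / 2) (airyBump k) = |k| ^ s * √(3 / lam) := by
  rw [XdotNorm_eq_of_forall_ne_eq_zero hlam hk _ fun l hl τ => by simp [airyBump_apply, hl]]
  simp only [airyBump_apply, if_true, mul_one_div_cancel (two_ne_zero' ℝ), Real.rpow_one,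
    integral_one_add_abs_sub_mul_norm_unitWindow_sq, one_div_mul_eq_div]

lemma XdotNorm_airyBump_mul_rpow (hlam : 0 < lam) {a p : ℝ}
    (hk : a * lam ^ p ∈ AddSubgroup.zmultiples lam⁻¹) :
    XdotNorm lam s (1 / 2) (airyBump (a * lam ^ p)) = √3 * |a| ^ s * lam ^ (p * s - 1 / 2) := by
  rw [XdotNorm_airyBump hlam.ne' hk, abs_mul, abs_of_pos (Real.rpow_pos_of_pos hlam p),
    Real.mul_rpow (abs_nonneg a) (by positivity), ← Real.rpow_mul hlam.le,
    Real.sqrt_div zero_le_three, Real.rpow_sub hlam, ← Real.sqrt_eq_rpow]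
  ring

variable {k₁ k₂ k₃ : ℝ}

lemma Jtilde_airyBump (hlam : lam ≠ 0) (hk₁ : k₁ ∈ AddSubgroup.zmultiples lam⁻¹)
    (hk₂ : k₂ ∈ AddSubgroup.zmultiples lam⁻¹)
    (hres : (k₁ + k₂) * (k₂ + k₃) * (k₃ + k₁) ≠ 0) (k τ : ℝ) :
    Jtilde lam (airyBump k₁) (airyBump k₂) (airyBump k₃) k τ =
      if k = k₁ + k₂ + k₃ then
        Complex.I * (k / 3) * ((1 / lam) ^ 2 *
          tripleWindow (airyPhase k₁) (airyPhase k₂) (airyPhase k₃) τ)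
      else 0 := by
  obtain ⟨p, rfl⟩ := mem_zmultiples_inv_iff.1 hk₁
  obtain ⟨q, rfl⟩ := mem_zmultiples_inv_iff.1 hk₂
  have hresonant : ¬(k = p / lam ∧ k = q / lam ∧ -k = k₃) := by
    rintro ⟨-, rfl, rfl⟩
    simp at hres
  simp only [Jtilde, integral_airyBump_mul_airyBump_mul_airyBump, div_left_inj' hlam,
    Int.cast_inj, if_neg hresonant, mul_zero, sub_zero]
  rw [tsum_eq_single (p, q)]
  · have hfreq : k = p / lam + q / lam + k₃ ↔ k - p / lam - q / lam = k₃ := by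
      rw [sub_sub, sub_eq_iff_eq_add']
    by_cases hk : k - p / lam - q / lam = k₃
    · simp only [hfreq, hk, hres, ne_eq, not_false_eq_true, and_self, if_true]
    · simp only [hfreq, hk, and_false, if_false, ite_self, mul_zero]
  · rintro ⟨p', q'⟩ hpq
    have hfreq : ¬(p' = p ∧ q' = q ∧ k - p' / lam - q' / lam = k₃) := fun h =>
      hpq (Prod.ext h.1 h.2.1)
    simp only [if_neg hfreq, ite_self]

lemma XdotNorm_Jtilde_airyBump (hlam : lam ≠ 0) (hk₁ : k₁ ∈ AddSubgroup.zmultiples lam⁻¹)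
    (hk₂ : k₂ ∈ AddSubgroup.zmultiples lam⁻¹) (hk₃ : k₃ ∈ AddSubgroup.zmultiples lam⁻¹)
    (hres : (k₁ + k₂) * (k₂ + k₃) * (k₃ + k₁) ≠ 0) :
    XdotNorm lam s (-(1 / 2)) (Jtilde lam (airyBump k₁) (airyBump k₂) (airyBump k₃)) =
      |k₁ + k₂ + k₃| ^ s * (|k₁ + k₂ + k₃| / (3 * lam ^ 2)) *
        √(1 / lam * ∫ τ, (1 + |τ - airyPhase (k₁ + k₂ + k₃)|)⁻¹ *
          ‖tripleWindow (airyPhase k₁) (airyPhase k₂) (airyPhase k₃) τ‖ ^ 2) := by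
  have hnorm (τ : ℝ) :
      ‖Jtilde lam (airyBump k₁) (airyBump k₂) (airyBump k₃) (k₁ + k₂ + k₃) τ‖ ^ 2 =
        (|k₁ + k₂ + k₃| / (3 * lam ^ 2)) ^ 2 *
          ‖tripleWindow (airyPhase k₁) (airyPhase k₂) (airyPhase k₃) τ‖ ^ 2 := by
    rw [Jtilde_airyBump hlam hk₁ hk₂ hres, if_pos rfl]
    simp only [norm_mul, norm_div, norm_pow, Complex.norm_I, Complex.norm_real, norm_one,
      Complex.norm_ofNat, Real.norm_eq_abs]
    rw [← sq_abs lam]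
    ring
  rw [XdotNorm_eq_of_forall_ne_eq_zero hlam (add_mem (add_mem hk₁ hk₂) hk₃) _ fun l hl τ => by
    rw [Jtilde_airyBump hlam hk₁ hk₂ hres, if_neg hl]]
  simp only [hnorm, mul_neg, mul_one_div_cancel (two_ne_zero' ℝ), Real.rpow_neg_one,
    mul_left_comm _ ((|k₁ + k₂ + k₃| / (3 * lam ^ 2)) ^ 2), integral_const_mul]
  rw [Real.sqrt_mul (by positivity), Real.sqrt_sq (by positivity), mul_assoc]

lemma le_XdotNorm_Jtilde_airyBump (hlam : 0 < lam) (hk₁ : k₁ ∈ AddSubgroup.zmultiples lam⁻¹)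
    (hk₂ : k₂ ∈ AddSubgroup.zmultiples lam⁻¹) (hk₃ : k₃ ∈ AddSubgroup.zmultiples lam⁻¹)
    (hres : (k₁ + k₂) * (k₂ + k₃) * (k₃ + k₁) ≠ 0) :
    |k₁ + k₂ + k₃| ^ s * (|k₁ + k₂ + k₃| / (3 * lam ^ 2)) *
        √(1 / lam * (32 / (3 * (4 + 12 * π ^ 2 * |(k₁ + k₂) * (k₂ + k₃) * (k₃ + k₁)|)))) ≤
      XdotNorm lam s (-(1 / 2)) (Jtilde lam (airyBump k₁) (airyBump k₂) (airyBump k₃)) := by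
  rw [XdotNorm_Jtilde_airyBump hlam.ne' hk₁ hk₂ hk₃ hres]
  have hmass := norm_integral_sq_le_integral_inv_one_add_abs_sub_mul_norm_sq zero_le_three
    (support_tripleWindow_subset (airyPhase k₁) (airyPhase k₂) (airyPhase k₃))
    (memLp_tripleWindow _ _ _) (airyPhase (k₁ + k₂ + k₃))
  rw [integral_tripleWindow, airyPhase_add_add_sub, abs_neg, abs_mul (12 * π ^ 2),
    abs_of_pos (by positivity : 0 < 12 * π ^ 2), Complex.norm_ofNat] at hmass
  gcongr
  rw [div_le_iff₀ (by positivity)]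
  linarith

end Bourgain

section Kishimoto

variable {lam : ℝ}

lemma pos_of_two_lt_mul_sqrt (h : 2 < lam * √lam) : 0 < lam :=
  pos_of_mul_pos_left (two_pos.trans h) (Real.sqrt_nonneg lam)

lemma two_lt_mul_sqrt_of_four_le (h : 4 ≤ lam) : 2 < lam * √lam := by
  have : 1 ≤ √lam := Real.one_le_sqrt.2 (by linarith)
  nlinarith

lemma one_div_mem_zmultiples_inv : 1 / lam ∈ AddSubgroup.zmultiples lam⁻¹ :=
  mem_zmultiples_inv_iff.2 ⟨1, by norm_num⟩

lemma neg_two_div_mem_zmultiples_inv : -2 / lam ∈ AddSubgroup.zmultiples lam⁻¹ :=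
  mem_zmultiples_inv_iff.2 ⟨-2, by norm_num⟩

lemma sqrt_mem_zmultiples_inv (hlam : lam ≠ 0) (hn : ∃ n : ℤ, (n : ℝ) = lam * √lam) :
    √lam ∈ AddSubgroup.zmultiples lam⁻¹ :=
  mem_zmultiples_inv_iff.2 (hn.imp fun n hn => by rw [hn, mul_div_cancel_left₀ _ hlam])

lemma XdotNorm_airyBump_one_div (hlam : 0 < lam) (s : ℝ) :
    XdotNorm lam s (1 / 2) (airyBump (1 / lam)) = √3 * lam ^ (-s - 1 / 2) := by
  have hk : 1 / lam = 1 * lam ^ (-1 : ℝ) := by rw [Real.rpow_neg_one, one_div, one_mul]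
  rw [hk, XdotNorm_airyBump_mul_rpow hlam (hk ▸ one_div_mem_zmultiples_inv)]
  simp

lemma XdotNorm_airyBump_neg_two_div (hlam : 0 < lam) (s : ℝ) :
    XdotNorm lam s (1 / 2) (airyBump (-2 / lam)) = √3 * 2 ^ s * lam ^ (-s - 1 / 2) := by
  have hk : -2 / lam = -2 * lam ^ (-1 : ℝ) := by rw [Real.rpow_neg_one, div_eq_mul_inv]
  rw [hk, XdotNorm_airyBump_mul_rpow hlam (hk ▸ neg_two_div_mem_zmultiples_inv)]
  simp

lemma XdotNorm_airyBump_sqrt (hlam : 0 < lam) (hn : ∃ n : ℤ, (n : ℝ) = lam * √lam) (s : ℝ) :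
    XdotNorm lam s (1 / 2) (airyBump √lam) = √3 * lam ^ (s / 2 - 1 / 2) := by
  have hk : √lam = 1 * lam ^ (1 / 2 : ℝ) := by rw [one_mul, Real.sqrt_eq_rpow]
  rw [hk, XdotNorm_airyBump_mul_rpow hlam (hk ▸ sqrt_mem_zmultiples_inv hlam.ne' hn)]
  simp [div_eq_inv_mul]

-- With `x = λ^(-3/2) < 1/2` the resonance function is `(1 + x) (2 x - 1)`.
lemma resonance_mem_Ico (h : 2 < lam * √lam) :
    (1 / lam + -2 / lam) * (-2 / lam + √lam) * (√lam + 1 / lam) ∈ Ico (-1) 0 := by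
  have hlam : 0 < lam := pos_of_two_lt_mul_sqrt h
  set x := 1 / (lam * √lam) with hx
  have hx_pos : 0 < x := by positivity
  have hx_lt : x < 1 / 2 := one_div_lt_one_div_of_lt two_pos h
  have hfactor : (1 / lam + -2 / lam) * (-2 / lam + √lam) * (√lam + 1 / lam) =
      (1 + x) * (2 * x - 1) := by
    have hsq : √lam ^ 2 = lam := Real.sq_sqrt hlam.le
    rw [hx]
    field_simp
    rw [hsq]
    ring
  rw [hfactor]
  exact ⟨by nlinarith, mul_neg_of_pos_of_neg (by linarith) (by linarith)⟩

lemma output_frequency_mem_Icc (h : 2 < lam * √lam) :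
    1 / lam + -2 / lam + √lam ∈ Icc (√lam / 2) √lam := by
  have hlam : 0 < lam := pos_of_two_lt_mul_sqrt h
  have hsum : 1 / lam + -2 / lam = -(1 / lam) := by ring
  have hdiv : 1 / lam ≤ √lam / 2 := by rw [div_le_div_iff₀ hlam two_pos]; linarith
  rw [hsum]
  constructor <;> linarith [one_div_pos.2 hlam]

lemma two_rpow_neg_abs_mul_rpow_le {r x : ℝ} (hr : 0 < r) (hx : x ∈ Icc (r / 2) r) (s : ℝ) :
    2 ^ (-|s|) * r ^ s ≤ x ^ s := by
  have hx_pos : 0 < x := (half_pos hr).trans_le hx.1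
  calc 2 ^ (-|s|) * r ^ s = (1 / 2) ^ |s| * r ^ s := by
        rw [Real.rpow_neg zero_le_two, one_div, Real.inv_rpow zero_le_two]
    _ ≤ (x / r) ^ |s| * r ^ s := by
        gcongr ?_ ^ _ * _
        rw [div_le_div_iff₀ two_pos hr]
        linarith [hx.1]
    _ ≤ (x / r) ^ s * r ^ s := by
        gcongr ?_ * _
        exact Real.rpow_le_rpow_of_exponent_ge (by positivity) ((div_le_one hr).2 hx.2)
          (le_abs_self s)
    _ = x ^ s := by rw [Real.div_rpow hx_pos.le hr.le, div_mul_cancel₀ _ (by positivity)]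

lemma rpow_le_XdotNorm_Jtilde_airyBump (h : 2 < lam * √lam)
    (hn : ∃ n : ℤ, (n : ℝ) = lam * √lam) (s : ℝ) :
    2 ^ (-|s|) / (6 * √12) * lam ^ (s / 2 - 2) ≤ XdotNorm lam s (-(1 / 2))
      (Jtilde lam (airyBump (1 / lam)) (airyBump (-2 / lam)) (airyBump √lam)) := by
  have hlam : 0 < lam := pos_of_two_lt_mul_sqrt h
  have hres := resonance_mem_Ico h
  have hK := output_frequency_mem_Icc h
  refine le_trans ?_ (le_XdotNorm_Jtilde_airyBump hlam one_div_mem_zmultiples_inv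
    neg_two_div_mem_zmultiples_inv (sqrt_mem_zmultiples_inv hlam.ne' hn) hres.2.ne)
  set R := (1 / lam + -2 / lam) * (-2 / lam + √lam) * (√lam + 1 / lam)
  set K := 1 / lam + -2 / lam + √lam
  have hsqrt : 0 < √lam := Real.sqrt_pos.2 hlam
  have hweight : 1 / 12 ≤ 32 / (3 * (4 + 12 * π ^ 2 * |R|)) := by
    have hR : |R| ≤ 1 := abs_le.2 ⟨hres.1, hres.2.le.trans zero_le_one⟩
    have hpi : π ^ 2 ≤ 10 := by nlinarith [Real.pi_lt_d2, Real.pi_pos]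
    have hmul : π ^ 2 * |R| ≤ 10 * 1 := by gcongr
    rw [div_le_div_iff₀ (by norm_num) (by positivity)]
    linarith
  have hK_pos : 0 < K := (half_pos hsqrt).trans_le hK.1
  rw [abs_of_pos hK_pos]
  calc 2 ^ (-|s|) / (6 * √12) * lam ^ (s / 2 - 2)
      = 2 ^ (-|s|) * √lam ^ s * (√lam / 2 / (3 * lam ^ 2)) * √(1 / lam * (1 / 12)) := by
        rw [Real.rpow_sub hlam, Real.rpow_two, Real.rpow_div_two_eq_sqrt s hlam.le,
          Real.sqrt_mul (by positivity), Real.sqrt_div zero_le_one, Real.sqrt_div zero_le_one,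
          Real.sqrt_one]
        field_simp
        norm_num
    _ ≤ K ^ s * (K / (3 * lam ^ 2)) *
          √(1 / lam * (32 / (3 * (4 + 12 * π ^ 2 * |R|)))) := by
        gcongr
        · exact two_rpow_neg_abs_mul_rpow_le hsqrt hK s
        · exact hK.1

end Kishimoto

lemma eventually_const_mul_rpow_lt_const_mul_rpow {a b : ℝ} (hab : a < b) (A : ℝ) {B : ℝ}
    (hB : 0 < B) : ∀ᶠ x : ℝ in atTop, A * x ^ a < B * x ^ b := by
  filter_upwards [(tendsto_rpow_atTop (sub_pos.2 hab)).eventually_gt_atTop (A / B),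
    eventually_gt_atTop 0] with x hx hx_pos
  calc A * x ^ a < x ^ (b - a) * B * x ^ a := by gcongr; exact (div_lt_iff₀ hB).1 hx
    _ = B * x ^ b := by rw [mul_right_comm, ← Real.rpow_add hx_pos, sub_add_cancel, mul_comm]

lemma frequently_exists_intCast_eq_mul_sqrt :
    ∃ᶠ lam : ℝ in atTop, ∃ n : ℤ, (n : ℝ) = lam * √lam := by
  have hsquares : Tendsto (fun m : ℕ => (m : ℝ) ^ 2) atTop atTop :=
    (tendsto_pow_atTop two_ne_zero).comp tendsto_natCast_atTop_atTop
  refine hsquares.frequently (.of_forall fun m => ⟨m ^ 3, ?_⟩)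
  rw [Real.sqrt_sq m.cast_nonneg]
  push_cast
  ring

lemma eventually_trilinear_estimate_lt {s ε : ℝ} (hε : ε < 2 * s - 1 / 2) (C : ℝ) :
    ∀ᶠ lam : ℝ in atTop, (∃ n : ℤ, (n : ℝ) = lam * √lam) →
      C * lam ^ ε *
          (XdotNorm lam s (1 / 2) (airyBump (1 / lam)) *
            XdotNorm lam s (1 / 2) (airyBump (-2 / lam)) *
            XdotNorm lam s (1 / 2) (airyBump √lam)) <
        XdotNorm lam s (-(1 / 2))
          (Jtilde lam (airyBump (1 / lam)) (airyBump (-2 / lam)) (airyBump √lam)) := by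
  have hexponent : ε + (-s - 1 / 2) + (-s - 1 / 2) + (s / 2 - 1 / 2) < s / 2 - 2 := by linarith
  filter_upwards [eventually_const_mul_rpow_lt_const_mul_rpow hexponent
      (C * (√3 * (√3 * 2 ^ s) * √3)) (by positivity : 0 < 2 ^ (-|s|) / (6 * √12)),
    eventually_ge_atTop 4] with lam hlt hlam hn
  have hpos : 0 < lam := by linarith
  rw [XdotNorm_airyBump_one_div hpos, XdotNorm_airyBump_neg_two_div hpos,
    XdotNorm_airyBump_sqrt hpos hn]
  refine lt_of_eq_of_lt ?_ (hlt.trans_le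
    (rpow_le_XdotNorm_Jtilde_airyBump (two_lt_mul_sqrt_of_four_le hlam) hn s))
  simp only [Real.rpow_add hpos]
  ring

theorem stmt_13_general (s : ℝ) :
    ∃ c1 > 0, ∃ c2 > 0, ∃ c3 > 0,
      (∀ lam : ℝ, 2 < lam * √lam → (∃ n : ℤ, (n : ℝ) = lam * √lam) →
        (c1 * lam ^ (-s - 1 / 2) ≤ XdotNorm lam s (1 / 2) (airyBump (1 / lam)) ∧
          XdotNorm lam s (1 / 2) (airyBump (1 / lam)) ≤ c2 * lam ^ (-s - 1 / 2)) ∧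
        (c1 * lam ^ (-s - 1 / 2) ≤ XdotNorm lam s (1 / 2) (airyBump (-2 / lam)) ∧
          XdotNorm lam s (1 / 2) (airyBump (-2 / lam)) ≤ c2 * lam ^ (-s - 1 / 2)) ∧
        (c1 * lam ^ (s / 2 - 1 / 2) ≤ XdotNorm lam s (1 / 2) (airyBump √lam) ∧
          XdotNorm lam s (1 / 2) (airyBump √lam) ≤ c2 * lam ^ (s / 2 - 1 / 2)) ∧
        c3 * lam ^ (s / 2 - 2) ≤
          XdotNorm lam s (-(1 / 2))
            (Jtilde lam (airyBump (1 / lam)) (airyBump (-2 / lam)) (airyBump √lam))) ∧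
      ∀ C ε : ℝ, ε < 2 * s - 1 / 2 → ∀ Λ : ℝ,
        ∃ lam : ℝ, Λ ≤ lam ∧ 4 ≤ lam ∧ (∃ n : ℤ, (n : ℝ) = lam * √lam) ∧
          C * lam ^ ε *
              (XdotNorm lam s (1 / 2) (airyBump (1 / lam)) *
                XdotNorm lam s (1 / 2) (airyBump (-2 / lam)) *
                XdotNorm lam s (1 / 2) (airyBump √lam))
            < XdotNorm lam s (-(1 / 2))
                (Jtilde lam (airyBump (1 / lam)) (airyBump (-2 / lam)) (airyBump √lam)) := by
  have hlower_one : √3 * 2 ^ (-|s|) ≤ √3 :=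
    mul_le_of_le_one_right (by positivity)
      (Real.rpow_le_one_of_one_le_of_nonpos one_le_two (by simp))
  have hupper_one : √3 ≤ √3 * 2 ^ |s| :=
    le_mul_of_one_le_right (by positivity) (Real.one_le_rpow one_le_two (abs_nonneg s))
  refine ⟨√3 * 2 ^ (-|s|), by positivity, √3 * 2 ^ |s|, by positivity,
    2 ^ (-|s|) / (6 * √12), by positivity, fun lam h hn => ?_, fun C ε hε Λ => ?_⟩
  · have hlam : 0 < lam := pos_of_two_lt_mul_sqrt h
    rw [XdotNorm_airyBump_one_div hlam, XdotNorm_airyBump_neg_two_div hlam,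
      XdotNorm_airyBump_sqrt hlam hn]
    refine ⟨⟨by gcongr, by gcongr⟩, ⟨?_, ?_⟩, ⟨by gcongr, by gcongr⟩,
      rpow_le_XdotNorm_Jtilde_airyBump h hn s⟩
    · gcongr
      exacts [one_le_two, neg_abs_le s]
    · gcongr
      exacts [one_le_two, le_abs_self s]
  · obtain ⟨lam, hn, hlt, hΛ, hlam⟩ := (frequently_exists_intCast_eq_mul_sqrt.and_eventually
      ((eventually_trilinear_estimate_lt hε C).and
        ((eventually_ge_atTop Λ).and (eventually_ge_atTop 4)))).exists
    exact ⟨lam, hΛ, hlam, hn, hlt hn⟩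

/-- Kishimoto's counterexample: for `s > 1/4`, with `v1, v2, v3` the Airy bumps at
frequencies `1/λ`, `−2/λ`, `√λ` respectively (`λ ≥ 4`, `√λ ∈ ℤ/λ`), one has
`‖v1‖_{Ẋ^{s,1/2}} ~ ‖v2‖_{Ẋ^{s,1/2}} ~ λ^{−s−1/2}`, `‖v3‖_{Ẋ^{s,1/2}} ~ λ^{s/2−1/2}`,
`‖J[v1,v2,v3]‖_{Ẋ^{s,−1/2}} ≳ λ^{s/2−2}`, and consequently the trilinear estimate
`‖J[v1,v2,v3]‖_{Ẋ^{s,−1/2}} ≲ λ^{0+} ∏‖vj‖_{Ẋ^{s,1/2}}` fails for large `λ`. -/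
theorem stmt_13 (s : ℝ) (hs : 1 / 4 < s) :
    ∃ c1 > 0, ∃ c2 > 0, ∃ c3 > 0,
      (∀ lam : ℝ, 4 ≤ lam → (∃ n : ℤ, (n : ℝ) = lam * Real.sqrt lam) →
        (c1 * lam ^ (-s - 1 / 2) ≤ XdotNorm lam s (1 / 2) (airyBump (1 / lam)) ∧
          XdotNorm lam s (1 / 2) (airyBump (1 / lam)) ≤ c2 * lam ^ (-s - 1 / 2)) ∧
        (c1 * lam ^ (-s - 1 / 2) ≤ XdotNorm lam s (1 / 2) (airyBump (-2 / lam)) ∧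
          XdotNorm lam s (1 / 2) (airyBump (-2 / lam)) ≤ c2 * lam ^ (-s - 1 / 2)) ∧
        (c1 * lam ^ (s / 2 - 1 / 2) ≤ XdotNorm lam s (1 / 2) (airyBump (Real.sqrt lam)) ∧
          XdotNorm lam s (1 / 2) (airyBump (Real.sqrt lam)) ≤ c2 * lam ^ (s / 2 - 1 / 2)) ∧
        c3 * lam ^ (s / 2 - 2) ≤
          XdotNorm lam s (-(1 / 2))
            (Jtilde lam (airyBump (1 / lam)) (airyBump (-2 / lam)) (airyBump (Real.sqrt lam)))) ∧
      ∀ C > 0, ∀ ε : ℝ, 0 < ε → ε < 2 * s - 1 / 2 → ∀ Λ : ℝ,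
        ∃ lam : ℝ, Λ ≤ lam ∧ 4 ≤ lam ∧ (∃ n : ℤ, (n : ℝ) = lam * Real.sqrt lam) ∧
          C * lam ^ ε *
              (XdotNorm lam s (1 / 2) (airyBump (1 / lam)) *
                XdotNorm lam s (1 / 2) (airyBump (-2 / lam)) *
                XdotNorm lam s (1 / 2) (airyBump (Real.sqrt lam)))
            < XdotNorm lam s (-(1 / 2))
                (Jtilde lam (airyBump (1 / lam)) (airyBump (-2 / lam))
                  (airyBump (Real.sqrt lam))) := by
  obtain ⟨c1, hc1, c2, hc2, c3, hc3, hbounds, hfail⟩ := stmt_13_general s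
  exact ⟨c1, hc1, c2, hc2, c3, hc3, fun lam hlam => hbounds lam (two_lt_mul_sqrt_of_four_le hlam),
    fun C _ ε _ hε => hfail C ε hε⟩
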